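/- Let k be a field, A a Hopf algebra over k with bijective antipode S, B ⊆ A a Hopf subalgebra (a subalgebra with Δ(B) ⊆ B⊗B, S(B) ⊆ B, S⁻¹(B) ⊆ B), and q : A → A' a surjective homomorphism of Hopf algebras onto a Hopf algebra A'. Let V be a (B,A,ker q)-dimodule: a B-module with an A'-comodule structure p* (written p*(v) = Σ v₍₋₁₎ ⊗ v₍₀₎) satisfying p*(b·v) = Σ q(b₍₃₎) v₍₋₁₎ q(S⁻¹(b₍₁₎)) ⊗ b₍₂₎·v₍₀₎ for all b ∈ B, v ∈ V. Let A ⊗_B V be the quotient of A ⊗_k V by the subspace spanned by all a b ⊗ v − a ⊗ b·v (a ∈ A, b ∈ B, v ∈ V), regarded as an A-module via left multiplication. Then there exists a unique A'-comodule structure π* on A ⊗_B V such that: (i) π*(1 ⊗ v) = Σ v₍₋₁₎ ⊗ (1 ⊗ v₍₀₎) for all v ∈ V, and (ii) the compatibility condition holds: π*(a·x) = Σ q(a₍₃₎) x₍₋₁₎ q(S⁻¹(a₍₁₎)) ⊗ a₍₂₎·x₍₀₎ for all a ∈ A and x ∈ A ⊗_B V. In particular A ⊗_B V is an (A,A,ker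 q)-dimodule. -/

import Mathlib

/- STATEMENT 5 (Proposition 3.2 of the paper): existence and uniqueness of the induced
dimodule structure on A ⊗_B V.

Conventions: `A` is a Hopf algebra over a field `k` with bijective antipode `S`
(inverse `Sinv`); `B ⊆ A` is a Hopf subalgebra (a subalgebra with `Δ(B) ⊆ B ⊗ B`,
`S(B) ⊆ B`, `S⁻¹(B) ⊆ B`); `q : A → A'` is a surjective Hopf algebra homomorphism,
realizing `A/I` with `I = ker q`.  A module structure is a unital associative action
`act : B ⊗ X → X`; a comodule structure over `A'` (paper's convention) is
`ρ : X → A' ⊗ X` with `(1 ⊗ ρ) ∘ ρ = (Δ'^op ⊗ 1) ∘ ρ` and `(ε' ⊗ 1) ∘ ρ = id`.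
The dimodule compatibility `π*(b·x) = Σ q(b₍₃₎) x₍₋₁₎ q(S⁻¹(b₍₁₎)) ⊗ b₍₂₎·x₍₀₎`
is encoded by `ydRHS` below.  `A ⊗_B V` is the quotient of `A ⊗_k V` by the subspace
spanned by all `a b ⊗ v − a ⊗ b·v` (this spanning set is stable under left
multiplication by `A`, so the `A`-span used below is the same subspace), with
`A` acting by left multiplication. -/

noncomputable section

open TensorProduct

section Defs

variable (k : Type*) [Field k]
variable (Bc A' V : Type*) [Ring Bc] [Algebra k Bc] [Ring A'] [Algebra k A']
  [AddCommGroup V] [Module k V]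

/-- Triple multiplication `m₃ : A' ⊗ (A' ⊗ A') → A'`. -/
def mul3 : A' ⊗[k] (A' ⊗[k] A') →ₗ[k] A' :=
  LinearMap.mul' k A' ∘ₗ TensorProduct.map LinearMap.id (LinearMap.mul' k A')

/-- The right-hand side of the dimodule compatibility condition:
given `Δ₃ : b ↦ b₍₁₎ ⊗ (b₍₂₎ ⊗ b₍₃₎)`, maps `b ⊗ x` to
`Σ g3(b₍₃₎) · x₍₋₁₎ · g1(b₍₁₎) ⊗ b₍₂₎ · x₍₀₎`. -/
def ydRHS (Δ₃ : Bc →ₗ[k] Bc ⊗[k] (Bc ⊗[k] Bc)) (g1 g3 : Bc →ₗ[k] A')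
    (ρ : V →ₗ[k] A' ⊗[k] V) (act : Bc ⊗[k] V →ₗ[k] V) :
    Bc ⊗[k] V →ₗ[k] A' ⊗[k] V :=
  TensorProduct.map (mul3 k A') act
    ∘ₗ TensorProduct.map
        (TensorProduct.map LinearMap.id (TensorProduct.comm k A' A').toLinearMap
          ∘ₗ (TensorProduct.assoc k A' A' A').toLinearMap) LinearMap.id
    ∘ₗ (tensorTensorTensorComm k (A' ⊗[k] A') Bc A' V).toLinearMap
    ∘ₗ TensorProduct.map
        (TensorProduct.map (TensorProduct.comm k A' A').toLinearMap LinearMap.id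
          ∘ₗ (TensorProduct.assoc k A' A' Bc).symm.toLinearMap
          ∘ₗ TensorProduct.map LinearMap.id (TensorProduct.comm k Bc A').toLinearMap
          ∘ₗ TensorProduct.map g1 (TensorProduct.map LinearMap.id g3)) LinearMap.id
    ∘ₗ TensorProduct.map Δ₃ ρ

/-- `act : B ⊗ X → X` is a unital associative action. -/
def IsModAction (act : Bc ⊗[k] V →ₗ[k] V) : Prop :=
  (∀ x : V, act ((1 : Bc) ⊗ₜ[k] x) = x) ∧
    act ∘ₗ TensorProduct.map (LinearMap.mul' k Bc) (LinearMap.id : V →ₗ[k] V) =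
      act ∘ₗ TensorProduct.map LinearMap.id act ∘ₗ (TensorProduct.assoc k Bc Bc V).toLinearMap

end Defs

section Comod

variable (k : Type*) [Field k]
variable (A' V : Type*) [Ring A'] [Bialgebra k A'] [AddCommGroup V] [Module k V]

/-- `ρ : V → A' ⊗ V` is a comodule structure in the paper's convention:
coassociative with respect to the *opposite* comultiplication, and counital. -/
def IsComod (ρ : V →ₗ[k] A' ⊗[k] V) : Prop :=
  (TensorProduct.map LinearMap.id ρ ∘ₗ ρ =
      (TensorProduct.assoc k A' A' V).toLinearMap
        ∘ₗ TensorProduct.map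
            ((TensorProduct.comm k A' A').toLinearMap ∘ₗ Coalgebra.comul (R := k))
            LinearMap.id
        ∘ₗ ρ) ∧
    (TensorProduct.lid k V).toLinearMap
        ∘ₗ TensorProduct.map (Coalgebra.counit (R := k)) LinearMap.id ∘ₗ ρ =
      LinearMap.id

end Comod

section Induced

variable (k A : Type*) [Field k] [Ring A] [HopfAlgebra k A]
variable (V : Type*) [AddCommGroup V] [Module k V]
variable (B : Subalgebra k A)
variable (actV : ↥B ⊗[k] V →ₗ[k] V)

/-- Iterated comultiplication `Δ₃ : a ↦ a₍₁₎ ⊗ (a₍₂₎ ⊗ a₍₃₎)` of a bialgebra. -/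
def comul3 : A →ₗ[k] A ⊗[k] (A ⊗[k] A) :=
  TensorProduct.map LinearMap.id (Coalgebra.comul (R := k)) ∘ₗ Coalgebra.comul (R := k)

/-- The set of relations `a b ⊗ v − a ⊗ b·v` (`a ∈ A`, `b ∈ B`, `v ∈ V`). -/
def indSet : Set (A ⊗[k] V) :=
  {x | ∃ (a : A) (b : B) (v : V), x = (a * (b : A)) ⊗ₜ[k] v - a ⊗ₜ[k] actV (b ⊗ₜ[k] v)}

/-- The subspace of `A ⊗ V` spanned by the relations `a b ⊗ v − a ⊗ b·v`.  (Since this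
set of generators is stable under left multiplication by `A`, its `A`-span coincides
with its `k`-span, and taking the `A`-span makes the quotient an `A`-module.) -/
def indSub : Submodule A (A ⊗[k] V) := Submodule.span A (indSet k A V B actV)

/-- `A ⊗_B V`, the quotient of `A ⊗_k V` by the span of `a b ⊗ v − a ⊗ b·v`. -/
abbrev IndMod := (A ⊗[k] V) ⧸ indSub k A V B actV

/-- The action of `A` on `A ⊗_B V` by left multiplication, as a map
`A ⊗ (A ⊗_B V) → A ⊗_B V`. -/
def indAct : A ⊗[k] IndMod k A V B actV →ₗ[k] IndMod k A V B actV :=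
  TensorProduct.lift (LinearMap.mk₂ k (fun a x => a • x)
    (fun a a' x => add_smul a a' x)
    (fun c a x => smul_assoc c a x)
    (fun a x y => smul_add a x y)
    (fun s m x => by
      show m • (s • x) = s • (m • x)
      rw [← algebraMap_smul A s x, ← mul_smul, ← Algebra.commutes, mul_smul,
        algebraMap_smul]))

/-- The canonical map `V → A ⊗_B V`, `v ↦ [1 ⊗ v]`. -/
def indIncl : V →ₗ[k] IndMod k A V B actV :=
  (LinearMap.restrictScalars k (indSub k A V B actV).mkQ) ∘ₗ (TensorProduct.mk k A V 1)

end Induced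

/-!
The compatibility condition on a coaction `π : W → A' ⊗ W` says that `π` is `A`-linear when `A` acts
on `A' ⊗ W` by `a • (s ⊗ w) = q(a₍₃₎) s q(S⁻¹(a₍₁₎)) ⊗ a₍₂₎ w`; this is an action because `q` is
multiplicative and `q ∘ S⁻¹` antimultiplicative. Compatibility on `V` says likewise that
`v ↦ v₍₋₁₎ ⊗ (1 ⊗ v₍₀₎)` is `B`-linear, so the universal property of `A ⊗_B V` gives a unique
`A`-linear extension `π`. Both sides of the coassociativity and counit laws for `π` are again
`A`-linear, because `q` preserves and `q ∘ S⁻¹` reverses the comultiplication, so these laws need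
only be checked on `1 ⊗ v`, where they are those of `V`.
-/

open Coalgebra HopfAlgebra LinearMap

section AntiHom

variable {R A B C : Type*} [CommSemiring R]

/-- `f` reverses both products and coproducts: it is a bialgebra homomorphism from `A` to `B` with
opposite multiplication and opposite comultiplication. The antipode and its inverse are the
motivating examples. -/
structure IsBialgAntiHom [Semiring A] [Bialgebra R A] [Semiring B] [Bialgebra R B]
    (f : A →ₗ[R] B) : Prop where
  map_one : f 1 = 1
  map_mul (a b : A) : f (a * b) = f b * f a
  counit_comp : counit ∘ₗ f = counit
  comul_comp : comul ∘ₗ f = map f f ∘ₗ (TensorProduct.comm R A A).toLinearMap ∘ₗ comul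

lemma IsBialgAntiHom.symm [Semiring A] [Bialgebra R A] [Semiring B] [Bialgebra R B]
    {e : A ≃ₗ[R] B} (he : IsBialgAntiHom e.toLinearMap) :
    IsBialgAntiHom e.symm.toLinearMap where
  map_one := e.symm_apply_eq.2 he.map_one.symm
  map_mul a b := by
    have h := he.map_mul (e.symm b) (e.symm a)
    simp only [LinearEquiv.coe_coe, LinearEquiv.apply_symm_apply] at h ⊢
    rw [← h, LinearEquiv.symm_apply_apply]
  counit_comp := by
    rw [← he.counit_comp, comp_assoc, LinearEquiv.comp_symm, comp_id]
  comul_comp := by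
    have hmap : map e.symm.toLinearMap e.symm.toLinearMap ∘ₗ
        (TensorProduct.comm R B B).toLinearMap ∘ₗ map e.toLinearMap e.toLinearMap ∘ₗ
          (TensorProduct.comm R A A).toLinearMap = LinearMap.id := by ext; simp
    calc comul ∘ₗ e.symm.toLinearMap
        = (map e.symm.toLinearMap e.symm.toLinearMap ∘ₗ
            (TensorProduct.comm R B B).toLinearMap ∘ₗ map e.toLinearMap e.toLinearMap ∘ₗ
              (TensorProduct.comm R A A).toLinearMap) ∘ₗ comul ∘ₗ e.symm.toLinearMap := by
          rw [hmap, id_comp]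
      _ = map e.symm.toLinearMap e.symm.toLinearMap ∘ₗ (TensorProduct.comm R B B).toLinearMap ∘ₗ
            (comul ∘ₗ e.toLinearMap) ∘ₗ e.symm.toLinearMap := by
          simp only [he.comul_comp, comp_assoc]
      _ = map e.symm.toLinearMap e.symm.toLinearMap ∘ₗ
            (TensorProduct.comm R B B).toLinearMap ∘ₗ comul := by
          rw [comp_assoc, LinearEquiv.comp_symm, comp_id]

lemma IsBialgAntiHom.comm_comp_comul_comp [Semiring A] [Bialgebra R A] [Semiring B]
    [Bialgebra R B] {f : A →ₗ[R] B} (hf : IsBialgAntiHom f) :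
    (TensorProduct.comm R B B).toLinearMap ∘ₗ comul ∘ₗ f = map f f ∘ₗ comul := by
  have hmap : (TensorProduct.comm R B B).toLinearMap ∘ₗ map f f ∘ₗ
      (TensorProduct.comm R A A).toLinearMap = map f f := by
    ext
    simp
  calc (TensorProduct.comm R B B).toLinearMap ∘ₗ comul ∘ₗ f
      = ((TensorProduct.comm R B B).toLinearMap ∘ₗ map f f ∘ₗ
          (TensorProduct.comm R A A).toLinearMap) ∘ₗ comul := by
        simp only [hf.comul_comp, comp_assoc]
    _ = map f f ∘ₗ comul := by rw [hmap]

lemma IsBialgAntiHom.bialgHom_comp [Semiring A] [Bialgebra R A] [Semiring B] [Bialgebra R B]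
    [Semiring C] [Bialgebra R C] {f : A →ₗ[R] B} (hf : IsBialgAntiHom f) (g : B →ₐc[R] C) :
    IsBialgAntiHom ((g : B →ₗ[R] C) ∘ₗ f) where
  map_one := by simp [hf.map_one]
  map_mul a b := by simp [hf.map_mul]
  counit_comp := by rw [← comp_assoc, CoalgHomClass.counit_comp, hf.counit_comp]
  comul_comp := by
    rw [← comp_assoc, ← CoalgHomClass.map_comp_comul, comp_assoc, hf.comul_comp, ← comp_assoc,
      ← TensorProduct.map_comp]

end AntiHom

section Antipode

variable {R A : Type*} [CommSemiring R] [Semiring A] [HopfAlgebra R A]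

lemma assoc_comp_map_comul_comul_comp_comul :
    (TensorProduct.assoc R A (A ⊗[R] A) A).toLinearMap ∘ₗ
        map (TensorProduct.assoc R A A A).toLinearMap LinearMap.id ∘ₗ
        (TensorProduct.assoc R (A ⊗[R] A) A A).symm.toLinearMap ∘ₗ
        map comul comul ∘ₗ comul =
      map LinearMap.id (map comul LinearMap.id ∘ₗ comul) ∘ₗ comul (R := R) (A := A) := by
  simp only [coassoc_simps]

variable (R A) in
/-- The map `a ⊗ ((b ⊗ c) ⊗ d) ↦ S(b) c ⊗ S(a) d`, which evaluates the convolution product of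
`(S ⊗ S) ∘ Δ^op` and `Δ`. -/
def antipodeContract : A ⊗[R] ((A ⊗[R] A) ⊗[R] A) →ₗ[R] A ⊗[R] A :=
  map (mul' R A ∘ₗ (antipode R).rTensor A) (mul' R A ∘ₗ (antipode R).rTensor A) ∘ₗ
    (TensorProduct.leftComm R A (A ⊗[R] A) A).toLinearMap

lemma antipodeContract_comp_assoc :
    antipodeContract R A ∘ₗ (TensorProduct.assoc R A (A ⊗[R] A) A).toLinearMap ∘ₗ
        map (TensorProduct.assoc R A A A).toLinearMap LinearMap.id ∘ₗ
        (TensorProduct.assoc R (A ⊗[R] A) A A).symm.toLinearMap =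
      mul' R (A ⊗[R] A) ∘ₗ
        map (map (antipode R) (antipode R) ∘ₗ (TensorProduct.comm R A A).toLinearMap)
          LinearMap.id := by
  ext
  simp [antipodeContract]

lemma antipodeContract_comp_map_comul :
    antipodeContract R A ∘ₗ map LinearMap.id (map comul LinearMap.id ∘ₗ comul) =
      TensorProduct.mk R A A 1 ∘ₗ mul' R A ∘ₗ (antipode R).rTensor A := by
  have contract : antipodeContract R A ∘ₗ map LinearMap.id (map comul LinearMap.id) =
      (TensorProduct.mk R A A 1 ∘ₗ mul' R A ∘ₗ (antipode R).rTensor A) ∘ₗ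
        map LinearMap.id ((TensorProduct.lid R A).toLinearMap ∘ₗ counit.rTensor A) := by
    ext
    simp [antipodeContract, mul_antipode_rTensor_comul_apply, Algebra.algebraMap_eq_smul_one,
      TensorProduct.smul_tmul]
  have counital : ((TensorProduct.lid R A).toLinearMap ∘ₗ counit.rTensor A) ∘ₗ comul =
      LinearMap.id := by
    ext
    simp
  calc antipodeContract R A ∘ₗ map LinearMap.id (map comul LinearMap.id ∘ₗ comul)
      = (antipodeContract R A ∘ₗ map LinearMap.id (map comul LinearMap.id)) ∘ₗ
          map LinearMap.id comul := by
        rw [comp_assoc, ← TensorProduct.map_comp, id_comp]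
    _ = TensorProduct.mk R A A 1 ∘ₗ mul' R A ∘ₗ (antipode R).rTensor A := by
        rw [contract, comp_assoc, ← TensorProduct.map_comp, id_comp, counital,
          TensorProduct.map_id, comp_id]

lemma mul'_comp_map_antipode_comul_comp_comul :
    mul' R (A ⊗[R] A) ∘ₗ
        map (map (antipode R) (antipode R) ∘ₗ (TensorProduct.comm R A A).toLinearMap ∘ₗ comul)
          comul ∘ₗ comul =
      Algebra.linearMap R (A ⊗[R] A) ∘ₗ counit := by
  have split : map (map (antipode R) (antipode R) ∘ₗ
        (TensorProduct.comm R A A).toLinearMap ∘ₗ comul) comul =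
      map (map (antipode R) (antipode R) ∘ₗ (TensorProduct.comm R A A).toLinearMap)
        LinearMap.id ∘ₗ map (comul (R := R)) (comul (R := R) (A := A)) := by
    rw [← TensorProduct.map_comp, id_comp, comp_assoc]
  calc mul' R (A ⊗[R] A) ∘ₗ map (map (antipode R) (antipode R) ∘ₗ
          (TensorProduct.comm R A A).toLinearMap ∘ₗ comul) comul ∘ₗ comul
      = (mul' R (A ⊗[R] A) ∘ₗ
          map (map (antipode R) (antipode R) ∘ₗ (TensorProduct.comm R A A).toLinearMap)
            LinearMap.id) ∘ₗ map comul comul ∘ₗ comul := by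
        simp only [split, comp_assoc]
    _ = antipodeContract R A ∘ₗ
          map LinearMap.id (map comul LinearMap.id ∘ₗ comul) ∘ₗ comul := by
        rw [← antipodeContract_comp_assoc, ← assoc_comp_map_comul_comul_comp_comul]
        simp only [comp_assoc]
    _ = TensorProduct.mk R A A 1 ∘ₗ mul' R A ∘ₗ (antipode R).rTensor A ∘ₗ comul := by
        rw [← comp_assoc, antipodeContract_comp_map_comul]
        simp only [comp_assoc]
    _ = Algebra.linearMap R (A ⊗[R] A) ∘ₗ counit := by
        rw [mul_antipode_rTensor_comul]
        ext
        simp [Algebra.algebraMap_eq_smul_one, Algebra.TensorProduct.one_def]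

lemma comul_comp_antipode :
    comul ∘ₗ antipode R =
      map (antipode R) (antipode R) ∘ₗ (TensorProduct.comm R A A).toLinearMap ∘ₗ
        comul (R := R) (A := A) := by
  -- both sides are convolution inverses of `comul`
  apply WithConv.toConv_injective
  exact (left_inv_eq_right_inv (a := WithConv.toConv (comul (R := R) (A := A)))
    (congrArg WithConv.toConv mul'_comp_map_antipode_comul_comp_comul) comul_right_inv).symm

variable (R A) in
lemma isBialgAntiHom_antipode : IsBialgAntiHom (antipode R (A := A)) where
  map_one := antipode_one
  map_mul := antipode_mul_antidistrib
  counit_comp := counit_comp_antipode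
  comul_comp := comul_comp_antipode

end Antipode

section Intertwines

variable {R C X Y Z : Type*} [CommSemiring R] [AddCommMonoid X] [Module R X] [AddCommMonoid Y]
  [Module R Y] [AddCommMonoid Z] [Module R Z]

/-- `f` commutes with the operators `φ c` on `X` and `ψ c` on `Y`. For algebra homomorphisms `φ`
and `ψ` this is linearity over `C`; families of operators are used in place of module structures
because `S ⊗ X` is acted upon in a way that conflicts with its standard module structure. -/
def Intertwines (φ : C → Module.End R X) (ψ : C → Module.End R Y) (f : X →ₗ[R] Y) : Prop :=
  ∀ c, f ∘ₗ φ c = ψ c ∘ₗ f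

lemma Intertwines.comp {φ : C → Module.End R X} {ψ : C → Module.End R Y}
    {χ : C → Module.End R Z} {g : Y →ₗ[R] Z} {f : X →ₗ[R] Y} (hg : Intertwines ψ χ g)
    (hf : Intertwines φ ψ f) : Intertwines φ χ (g ∘ₗ f) := fun c ↦ by
  rw [comp_assoc, hf c, ← comp_assoc, hg c, comp_assoc]

lemma Intertwines.id (φ : C → Module.End R X) : Intertwines φ φ LinearMap.id := fun _ ↦ rfl

end Intertwines

section Sandwich

variable {R S : Type*} [CommSemiring R] [Semiring S] [Algebra R S]
variable {C₁ C₂ C₃ X : Type*} [AddCommMonoid C₁] [Module R C₁] [AddCommMonoid C₂] [Module R C₂]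
  [AddCommMonoid C₃] [Module R C₃] [AddCommMonoid X] [Module R X]

/-- The operator `s ⊗ x ↦ g₃(c₃) s g₁(c₁) ⊗ φ(c₂) x` on `S ⊗ X` attached to `c₁ ⊗ (c₂ ⊗ c₃)`. -/
def sandwich (g₁ : C₁ →ₗ[R] S) (g₃ : C₃ →ₗ[R] S) (φ : C₂ →ₗ[R] Module.End R X) :
    C₁ ⊗[R] (C₂ ⊗[R] C₃) →ₗ[R] Module.End R (S ⊗[R] X) :=
  homTensorHomMap (.id R) S X S X ∘ₗ
    map ((AlgHom.mulLeftRight R S).toLinearMap ∘ₗ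
      map g₃ ((MulOpposite.opLinearEquiv R).toLinearMap ∘ₗ g₁)) φ ∘ₗ
    (TensorProduct.comm R C₂ (C₃ ⊗[R] C₁)).toLinearMap ∘ₗ
    (TensorProduct.assoc R C₂ C₃ C₁).toLinearMap ∘ₗ
    (TensorProduct.comm R C₁ (C₂ ⊗[R] C₃)).toLinearMap

@[simp]
lemma sandwich_tmul_tmul (g₁ : C₁ →ₗ[R] S) (g₃ : C₃ →ₗ[R] S) (φ : C₂ →ₗ[R] Module.End R X)
    (c₁ : C₁) (c₂ : C₂) (c₃ : C₃) (s : S) (x : X) :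
    sandwich g₁ g₃ φ (c₁ ⊗ₜ (c₂ ⊗ₜ c₃)) (s ⊗ₜ x) = (g₃ c₃ * s * g₁ c₁) ⊗ₜ φ c₂ x := by
  simp [sandwich]

lemma sandwich_map {D₁ D₂ D₃ : Type*} [AddCommMonoid D₁] [Module R D₁]
    [AddCommMonoid D₂] [Module R D₂] [AddCommMonoid D₃] [Module R D₃]
    (g₁ : D₁ →ₗ[R] S) (g₃ : D₃ →ₗ[R] S) (φ : D₂ →ₗ[R] Module.End R X)
    (p₁ : C₁ →ₗ[R] D₁) (p₂ : C₂ →ₗ[R] D₂) (p₃ : C₃ →ₗ[R] D₃) (t : C₁ ⊗[R] (C₂ ⊗[R] C₃)) :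
    sandwich g₁ g₃ φ (map p₁ (map p₂ p₃) t) = sandwich (g₁ ∘ₗ p₁) (g₃ ∘ₗ p₃) (φ ∘ₗ p₂) t := by
  suffices H : sandwich g₁ g₃ φ ∘ₗ map p₁ (map p₂ p₃) =
      sandwich (g₁ ∘ₗ p₁) (g₃ ∘ₗ p₃) (φ ∘ₗ p₂) from LinearMap.congr_fun H t
  ext
  simp

lemma map_comp_sandwich {T Y : Type*} [Semiring T] [Algebra R T] [AddCommMonoid Y] [Module R Y]
    {φ : C₂ →ₗ[R] Module.End R X} {ψ : C₂ →ₗ[R] Module.End R Y} {f : X →ₗ[R] Y}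
    (g₁ : C₁ →ₗ[R] S) (g₃ : C₃ →ₗ[R] S) (h : S →ₐ[R] T)
    (hf : Intertwines φ ψ f) (t : C₁ ⊗[R] (C₂ ⊗[R] C₃)) :
    map h.toLinearMap f ∘ₗ sandwich g₁ g₃ φ t =
      sandwich (h.toLinearMap ∘ₗ g₁) (h.toLinearMap ∘ₗ g₃) ψ t ∘ₗ map h.toLinearMap f := by
  suffices H : compRight R (map h.toLinearMap f) ∘ₗ sandwich g₁ g₃ φ =
      lcomp R _ (map h.toLinearMap f) ∘ₗ
        sandwich (h.toLinearMap ∘ₗ g₁) (h.toLinearMap ∘ₗ g₃) ψ from LinearMap.congr_fun H t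
  ext c₁ c₂ c₃ s x
  simp [← LinearMap.comp_apply f, hf c₂]

/-- Nests a pair of sandwiching tensors:
`(m₁ ⊗ m₂) ⊗ (n ⊗ (p₁ ⊗ p₂)) ↦ m₁ ⊗ ((m₂ ⊗ (n ⊗ p₂)) ⊗ p₁)`. -/
def nest (R M N P : Type*) [CommSemiring R] [AddCommMonoid M] [Module R M] [AddCommMonoid N]
    [Module R N] [AddCommMonoid P] [Module R P] :
    (M ⊗[R] M) ⊗[R] (N ⊗[R] (P ⊗[R] P)) →ₗ[R] M ⊗[R] ((M ⊗[R] (N ⊗[R] P)) ⊗[R] P) :=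
  map LinearMap.id
      (map (TensorProduct.assoc R M N P).toLinearMap LinearMap.id ∘ₗ
        (TensorProduct.assoc R (M ⊗[R] N) P P).symm.toLinearMap ∘ₗ
        (TensorProduct.assoc R M N (P ⊗[R] P)).symm.toLinearMap) ∘ₗ
    (TensorProduct.assoc R M M (N ⊗[R] (P ⊗[R] P))).toLinearMap ∘ₗ
    map LinearMap.id (map LinearMap.id (TensorProduct.comm R P P).toLinearMap)

lemma assoc_comp_sandwich (g₁ : C₁ →ₗ[R] S) (g₃ : C₃ →ₗ[R] S) (φ : C₂ →ₗ[R] Module.End R X)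
    (t : (C₁ ⊗[R] C₁) ⊗[R] (C₂ ⊗[R] (C₃ ⊗[R] C₃))) :
    (TensorProduct.assoc R S S X).toLinearMap ∘ₗ sandwich (map g₁ g₁) (map g₃ g₃) φ t =
      sandwich g₁ g₃ (sandwich g₁ g₃ φ) (nest R C₁ C₂ C₃ t) ∘ₗ
        (TensorProduct.assoc R S S X).toLinearMap := by
  suffices H : compRight R (TensorProduct.assoc R S S X).toLinearMap ∘ₗ
        sandwich (map g₁ g₁) (map g₃ g₃) φ =
      lcomp R _ (TensorProduct.assoc R S S X).toLinearMap ∘ₗ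
        sandwich g₁ g₃ (sandwich g₁ g₃ φ) ∘ₗ nest R C₁ C₂ C₃ from LinearMap.congr_fun H t
  ext
  simp [nest]

lemma sandwich_mul {C : Type*} [Semiring C] [Algebra R C] {g₁ : C →ₗ[R] S}
    (hg₁ : ∀ a b, g₁ (a * b) = g₁ b * g₁ a) (g₃ : C →ₐ[R] S) (φ : C →ₐ[R] Module.End R X)
    (s t : C ⊗[R] (C ⊗[R] C)) :
    sandwich g₁ g₃.toLinearMap φ.toLinearMap (s * t) =
      sandwich g₁ g₃.toLinearMap φ.toLinearMap s * sandwich g₁ g₃.toLinearMap φ.toLinearMap t := by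
  revert s t
  rw [LinearMap.map_mul_iff]
  ext
  simp [hg₁, mul_assoc]

end Sandwich

section YetterDrinfeld

variable {k C A' X : Type*} [Field k] [Ring C] [Algebra k C] [Ring A'] [Algebra k A']
  [AddCommGroup X] [Module k X] (Δ₃ : C →ₗ[k] C ⊗[k] (C ⊗[k] C)) (g₁ g₃ : C →ₗ[k] A')
  (ρ : X →ₗ[k] A' ⊗[k] X) (act : C ⊗[k] X →ₗ[k] X)

lemma ydRHS_eq_lift_sandwich :
    ydRHS k C A' X Δ₃ g₁ g₃ ρ act =
      TensorProduct.lift (sandwich g₁ g₃ (TensorProduct.curry act)) ∘ₗ map Δ₃ ρ := by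
  simp only [ydRHS, ← comp_assoc]
  congr 1
  ext
  simp [mul3, mul_assoc]

lemma comp_eq_ydRHS_iff_intertwines :
    ρ ∘ₗ act = ydRHS k C A' X Δ₃ g₁ g₃ ρ act ↔
      Intertwines (TensorProduct.curry act)
        (fun c ↦ sandwich g₁ g₃ (TensorProduct.curry act) (Δ₃ c)) ρ := by
  rw [ydRHS_eq_lift_sandwich]
  exact ⟨fun h c ↦ LinearMap.ext fun x ↦ LinearMap.congr_fun h (c ⊗ₜ x),
    fun h ↦ TensorProduct.ext' fun c x ↦ LinearMap.congr_fun (h c) x⟩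

end YetterDrinfeld

section Comul3

variable {k A : Type*} [Field k] [Ring A] [HopfAlgebra k A]

lemma comul3_one : comul3 k A 1 = 1 := by
  simp [comul3, Algebra.TensorProduct.one_def]

lemma comul3_mul (a b : A) : comul3 k A (a * b) = comul3 k A a * comul3 k A b :=
  map_mul ((Algebra.TensorProduct.map (AlgHom.id k A) (Bialgebra.comulAlgHom k A)).comp
    (Bialgebra.comulAlgHom k A)) a b

lemma map_counit_comul3 (a : A) :
    map counit (map LinearMap.id counit) (comul3 k A a) = (1 : k) ⊗ₜ[k] (a ⊗ₜ[k] (1 : k)) := by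
  have inner : map (LinearMap.id (M := A)) (counit (R := k)) ∘ₗ comul =
      (TensorProduct.mk k A k).flip 1 :=
    LinearMap.ext lTensor_counit_comul
  calc map counit (map LinearMap.id counit) (comul3 k A a)
      = (map counit (map LinearMap.id counit ∘ₗ comul)) (comul a) := by
        rw [comul3, comp_apply, TensorProduct.map_map, comp_id]
    _ = map LinearMap.id ((TensorProduct.mk k A k).flip 1) (counit.rTensor A (comul a)) := by
        rw [inner, LinearMap.rTensor, TensorProduct.map_map, id_comp, comp_id]
    _ = (1 : k) ⊗ₜ[k] (a ⊗ₜ[k] (1 : k)) := by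
        rw [rTensor_counit_comul, TensorProduct.map_tmul]
        rfl

lemma nest_comp_comul3 :
    nest k A A A ∘ₗ
        map comul (map LinearMap.id ((TensorProduct.comm k A A).toLinearMap ∘ₗ comul)) ∘ₗ
        comul3 k A =
      map LinearMap.id (map (comul3 k A) LinearMap.id) ∘ₗ comul3 k A := by
  simp only [nest, comul3, coassoc_simps]

lemma map_val_comp_eq_comul3_comp_val {B : Subalgebra k A} {ΔB : B →ₗ[k] B ⊗[k] B}
    (hΔB : map B.val.toLinearMap B.val.toLinearMap ∘ₗ ΔB = comul ∘ₗ B.val.toLinearMap) :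
    map B.val.toLinearMap (map B.val.toLinearMap B.val.toLinearMap) ∘ₗ
        map LinearMap.id ΔB ∘ₗ ΔB = comul3 k A ∘ₗ B.val.toLinearMap := by
  rw [comul3, comp_assoc, ← hΔB, ← comp_assoc, ← comp_assoc, ← TensorProduct.map_comp,
    ← TensorProduct.map_comp, hΔB, comp_id, id_comp]

end Comul3

section TwistedAction

variable {k A A' X Y : Type*} [Field k] [Ring A] [HopfAlgebra k A] [Ring A'] [Bialgebra k A']
  [AddCommGroup X] [Module k X] [AddCommGroup Y] [Module k Y] {g₁ : A →ₗ[k] A'}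

/-- The action `a • (s ⊗ x) = g₃(a₍₃₎) s g₁(a₍₁₎) ⊗ a₍₂₎ x` of `A` on `A' ⊗ X`. The dimodule
compatibility of a coaction `X → A' ⊗ X` is its linearity with respect to this action. -/
def twistedAction (hg₁ : IsBialgAntiHom g₁) (g₃ : A →ₐc[k] A') (φ : A →ₐ[k] Module.End k X) :
    A →ₐ[k] Module.End k (A' ⊗[k] X) :=
  AlgHom.ofLinearMap (sandwich g₁ (g₃ : A →ₐ[k] A').toLinearMap φ.toLinearMap ∘ₗ comul3 k A)
    (by
      ext
      simp [comul3_one, Algebra.TensorProduct.one_def, hg₁.map_one])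
    (fun a b ↦ by simp only [comp_apply, comul3_mul, sandwich_mul hg₁.map_mul])

variable (hg₁ : IsBialgAntiHom g₁) (g₃ : A →ₐc[k] A')

lemma Intertwines.lTensor_twistedAction {φ : A →ₐ[k] Module.End k X}
    {ψ : A →ₐ[k] Module.End k Y} {f : X →ₗ[k] Y} (hf : Intertwines φ ψ f) :
    Intertwines (twistedAction hg₁ g₃ φ) (twistedAction hg₁ g₃ ψ) (map LinearMap.id f) :=
  fun a ↦ map_comp_sandwich g₁ (g₃ : A →ₐ[k] A').toLinearMap (AlgHom.id k A') hf (comul3 k A a)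

lemma intertwines_twistedAction_counit (φ : A →ₐ[k] Module.End k X) :
    Intertwines (twistedAction hg₁ g₃ φ) φ
      ((TensorProduct.lid k X).toLinearMap ∘ₗ map counit LinearMap.id) := fun a ↦ by
  have hg₃ : counit ∘ₗ (g₃ : A →ₐ[k] A').toLinearMap = counit := CoalgHomClass.counit_comp g₃
  have hsandwich : map counit LinearMap.id ∘ₗ twistedAction hg₁ g₃ φ a =
      sandwich LinearMap.id LinearMap.id φ.toLinearMap ((1 : k) ⊗ₜ[k] (a ⊗ₜ[k] (1 : k))) ∘ₗ
        map counit LinearMap.id := by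
    refine (map_comp_sandwich g₁ (g₃ : A →ₐ[k] A').toLinearMap (Bialgebra.counitAlgHom k A')
      (ψ := φ.toLinearMap) (.id φ) (comul3 k A a)).trans ?_
    rw [Bialgebra.toLinearMap_counitAlgHom, hg₁.counit_comp, hg₃, ← map_counit_comul3,
      sandwich_map, id_comp, comp_id]
  rw [comp_assoc, hsandwich, ← comp_assoc, ← comp_assoc]
  congr 1
  ext
  simp

variable (A') in
lemma lid_comp_map_counit_comp_map_id (f : X →ₗ[k] Y) :
    ((TensorProduct.lid k Y).toLinearMap ∘ₗ map (counit (A := A')) LinearMap.id) ∘ₗ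
        map LinearMap.id f =
      f ∘ₗ (TensorProduct.lid k X).toLinearMap ∘ₗ map counit LinearMap.id := by
  ext
  simp

variable (A' X) in
/-- The map `Δ^op ⊗ id` by which coassociativity of a coaction `X → A' ⊗ X` is expressed in the
convention of `IsComod`. -/
def opComul : A' ⊗[k] X →ₗ[k] A' ⊗[k] (A' ⊗[k] X) :=
  (TensorProduct.assoc k A' A' X).toLinearMap ∘ₗ
    map ((TensorProduct.comm k A' A').toLinearMap ∘ₗ comul) LinearMap.id

lemma opComul_comp_map_id (f : X →ₗ[k] Y) :
    opComul A' Y ∘ₗ map LinearMap.id f = map LinearMap.id (map LinearMap.id f) ∘ₗ opComul A' X := by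
  rw [opComul, opComul, ← comp_assoc, TensorProduct.map_map_comp_assoc_eq, comp_assoc, comp_assoc,
    ← TensorProduct.map_comp, ← TensorProduct.map_comp, TensorProduct.map_id, id_comp, comp_id,
    id_comp, comp_id]

lemma intertwines_opComul (φ : A →ₐ[k] Module.End k X) :
    Intertwines (twistedAction hg₁ g₃ φ) (twistedAction hg₁ g₃ (twistedAction hg₁ g₃ φ))
      (opComul A' X) := fun a ↦ by
  let g : A →ₗ[k] A' := (g₃ : A →ₐ[k] A').toLinearMap
  let Δop : A' →ₐ[k] A' ⊗[k] A' :=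
    (Algebra.TensorProduct.comm k A' A').toAlgHom.comp (Bialgebra.comulAlgHom k A')
  let swap : A ⊗[k] A →ₗ[k] A ⊗[k] A := (TensorProduct.comm k A A).toLinearMap
  have hΔg₁ : Δop.toLinearMap ∘ₗ g₁ = map g₁ g₁ ∘ₗ comul := hg₁.comm_comp_comul_comp
  have hΔg : Δop.toLinearMap ∘ₗ g = map g g ∘ₗ swap ∘ₗ comul := by
    change (TensorProduct.comm k A' A').toLinearMap ∘ₗ comul ∘ₗ (g₃ : A →ₗ[k] A') = _
    rw [← CoalgHomClass.map_comp_comul, ← comp_assoc, ← TensorProduct.map_comp_comm_eq, comp_assoc]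
    rfl
  calc opComul A' X ∘ₗ twistedAction hg₁ g₃ φ a
      = (TensorProduct.assoc k A' A' X).toLinearMap ∘ₗ
          map Δop.toLinearMap LinearMap.id ∘ₗ sandwich g₁ g φ.toLinearMap (comul3 k A a) := rfl
    _ = (TensorProduct.assoc k A' A' X).toLinearMap ∘ₗ
          sandwich (map g₁ g₁) (map g g) φ.toLinearMap
            (map comul (map LinearMap.id (swap ∘ₗ comul)) (comul3 k A a)) ∘ₗ
          map Δop.toLinearMap LinearMap.id := by
        rw [map_comp_sandwich _ _ _ (.id _), hΔg₁, hΔg, sandwich_map, comp_id]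
    _ = sandwich g₁ g (sandwich g₁ g φ.toLinearMap)
          (map LinearMap.id (map (comul3 k A) LinearMap.id) (comul3 k A a)) ∘ₗ opComul A' X := by
        rw [← comp_assoc, assoc_comp_sandwich, comp_assoc]
        exact congrArg (sandwich g₁ g (sandwich g₁ g φ.toLinearMap) · ∘ₗ opComul A' X)
          (LinearMap.congr_fun nest_comp_comul3 a)
    _ = twistedAction hg₁ g₃ (twistedAction hg₁ g₃ φ) a ∘ₗ opComul A' X := by
        rw [sandwich_map, comp_id, comp_id]
        rfl

end TwistedAction

section Induction

variable {k A V : Type*} [Field k] [Ring A] [HopfAlgebra k A] [AddCommGroup V] [Module k V]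
  {B : Subalgebra k A} {actV : B ⊗[k] V →ₗ[k] V}

/-- The action of `A` on `A ⊗_B V` as an algebra homomorphism: the curried form of
`indAct`. -/
abbrev indSmul (actV : B ⊗[k] V →ₗ[k] V) : A →ₐ[k] Module.End k (IndMod k A V B actV) :=
  Algebra.lsmul k k (IndMod k A V B actV)

lemma mkQ_indSub_tmul (a : A) (v : V) :
    (indSub k A V B actV).mkQ (a ⊗ₜ v) = a • indIncl k A V B actV v := by
  change _ = a • (indSub k A V B actV).mkQ (1 ⊗ₜ v)
  rw [← map_smul, TensorProduct.smul_tmul', smul_eq_mul, mul_one]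

lemma indIncl_actV_tmul (b : B) (v : V) :
    indIncl k A V B actV (actV (b ⊗ₜ v)) = (b : A) • indIncl k A V B actV v := by
  rw [← mkQ_indSub_tmul, eq_comm]
  refine (Submodule.Quotient.eq _).2 (Submodule.subset_span ⟨1, b, v, ?_⟩)
  rw [one_mul]
  rfl

lemma isModAction_indAct : IsModAction k A (IndMod k A V B actV) (indAct k A V B actV) :=
  ⟨one_smul A, TensorProduct.ext_threefold mul_smul⟩

variable {M : Type*} [AddCommGroup M] [Module k M]

lemma Intertwines.ind_hom_ext {σ : A → Module.End k M} {f g : IndMod k A V B actV →ₗ[k] M}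
    (hf : Intertwines (indSmul actV) σ f) (hg : Intertwines (indSmul actV) σ g)
    (h : f ∘ₗ indIncl k A V B actV = g ∘ₗ indIncl k A V B actV) : f = g := by
  refine LinearMap.ext fun x ↦ ?_
  obtain ⟨t, rfl⟩ := Submodule.mkQ_surjective _ x
  induction t with
  | zero => simp
  | add s t hs ht => rw [map_add, map_add, map_add, hs, ht]
  | tmul a v =>
    rw [mkQ_indSub_tmul]
    have hfa := LinearMap.congr_fun (hf a) (indIncl k A V B actV v)
    have hga := LinearMap.congr_fun (hg a) (indIncl k A V B actV v)
    exact hfa.trans ((congrArg (σ a) (LinearMap.congr_fun h v)).trans hga.symm)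

lemma exists_intertwines_ind (σ : A →ₐ[k] Module.End k M) {f : V →ₗ[k] M}
    (hf : ∀ (b : B) (v : V), f (actV (b ⊗ₜ v)) = σ b (f v)) :
    ∃ F : IndMod k A V B actV →ₗ[k] M,
      Intertwines (indSmul actV) σ F ∧ F ∘ₗ indIncl k A V B actV = f := by
  let P : A ⊗[k] V →ₗ[k] M := TensorProduct.lift (lcomp k M f ∘ₗ σ.toLinearMap)
  have P_smul (a : A) (t : A ⊗[k] V) : P (a • t) = σ a (P t) := by
    induction t with
    | zero => simp
    | add s t hs ht => rw [smul_add, map_add, map_add, map_add, hs, ht]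
    | tmul b v => simp [P, TensorProduct.smul_tmul']
  have P_indSub (t : A ⊗[k] V) (ht : t ∈ indSub k A V B actV) : P t = 0 := by
    induction ht using Submodule.span_induction with
    | mem x hx =>
      obtain ⟨a, b, v, rfl⟩ := hx
      simp [P, hf]
    | zero => exact map_zero P
    | add x y _ _ hx hy => rw [map_add, hx, hy, add_zero]
    | smul a x _ hx => rw [P_smul, hx, map_zero]
  refine ⟨((indSub k A V B actV).restrictScalars k).liftQ P P_indSub, fun a ↦ ?_, ?_⟩
  · refine LinearMap.ext fun x ↦ ?_
    obtain ⟨t, rfl⟩ := Submodule.mkQ_surjective _ x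
    exact P_smul a t
  · refine LinearMap.ext fun v ↦ ?_
    change P (1 ⊗ₜ v) = f v
    simp [P]

end Induction

section Dimodule

/-- The `(C, A, I)`-dimodules of the paper: a `C`-module and `A'`-comodule `X` whose coaction
satisfies `ρ(c x) = Σ g₃(c₍₃₎) x₍₋₁₎ g₁(c₍₁₎) ⊗ c₍₂₎ x₍₀₎`. The iterated coproduct of `C` and the
maps `g₁`, `g₃` are parameters; the paper has `A' = A/I`, with `g₃` the projection `q` and
`g₁ = q ∘ S⁻¹`, both restricted to `C`. -/
structure IsDimodule {k C A' X : Type*} [Field k] [Ring C] [Algebra k C] [Ring A']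
    [Bialgebra k A'] [AddCommGroup X] [Module k X] (Δ₃ : C →ₗ[k] C ⊗[k] (C ⊗[k] C))
    (g₁ g₃ : C →ₗ[k] A') (act : C ⊗[k] X →ₗ[k] X) (ρ : X →ₗ[k] A' ⊗[k] X) : Prop where
  isModAction : IsModAction k C X act
  isComod : IsComod k A' X ρ
  compat : ρ ∘ₗ act = ydRHS k C A' X Δ₃ g₁ g₃ ρ act

variable {k A A' V : Type*} [Field k] [Ring A] [HopfAlgebra k A] [Ring A'] [Bialgebra k A']
  [AddCommGroup V] [Module k V] {g₁ : A →ₗ[k] A'} (hg₁ : IsBialgAntiHom g₁) (g₃ : A →ₐc[k] A')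
  {B : Subalgebra k A} {actV : B ⊗[k] V →ₗ[k] V} {ρV : V →ₗ[k] A' ⊗[k] V}

lemma compat_indAct_iff_intertwines
    (π : IndMod k A V B actV →ₗ[k] A' ⊗[k] IndMod k A V B actV) :
    π ∘ₗ indAct k A V B actV = ydRHS k A A' (IndMod k A V B actV) (comul3 k A) g₁
        (g₃ : A →ₐ[k] A').toLinearMap π (indAct k A V B actV) ↔
      Intertwines (indSmul actV) (twistedAction hg₁ g₃ (indSmul actV)) π :=
  comp_eq_ydRHS_iff_intertwines _ _ _ _ _

lemma map_indIncl_coaction_actV_tmul {ΔB : B →ₗ[k] B ⊗[k] B}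
    (hΔB : map B.val.toLinearMap B.val.toLinearMap ∘ₗ ΔB = comul ∘ₗ B.val.toLinearMap)
    (hρV : ρV ∘ₗ actV = ydRHS k B A' V (map LinearMap.id ΔB ∘ₗ ΔB) (g₁ ∘ₗ B.val.toLinearMap)
      ((g₃ : A →ₐ[k] A').toLinearMap ∘ₗ B.val.toLinearMap) ρV actV) (b : B) (v : V) :
    (map LinearMap.id (indIncl k A V B actV) ∘ₗ ρV) (actV (b ⊗ₜ v)) =
      twistedAction hg₁ g₃ (indSmul actV) b
        ((map LinearMap.id (indIncl k A V B actV) ∘ₗ ρV) v) := by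
  let φ : A →ₗ[k] Module.End k (IndMod k A V B actV) := (indSmul actV).toLinearMap
  let g : A →ₗ[k] A' := (g₃ : A →ₐ[k] A').toLinearMap
  have hι : Intertwines (TensorProduct.curry actV) (φ ∘ₗ B.val.toLinearMap)
      (indIncl k A V B actV) := fun b ↦ LinearMap.ext (indIncl_actV_tmul b)
  calc map LinearMap.id (indIncl k A V B actV) (ρV (actV (b ⊗ₜ v)))
      = map LinearMap.id (indIncl k A V B actV)
          (sandwich (g₁ ∘ₗ B.val.toLinearMap) (g ∘ₗ B.val.toLinearMap) (TensorProduct.curry actV)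
            ((map LinearMap.id ΔB ∘ₗ ΔB) b) (ρV v)) :=
        congrArg _ (LinearMap.congr_fun ((comp_eq_ydRHS_iff_intertwines _ _ _ _ _).1 hρV b) v)
    _ = sandwich (g₁ ∘ₗ B.val.toLinearMap) (g ∘ₗ B.val.toLinearMap) (φ ∘ₗ B.val.toLinearMap)
          ((map LinearMap.id ΔB ∘ₗ ΔB) b) (map LinearMap.id (indIncl k A V B actV) (ρV v)) :=
        LinearMap.congr_fun (map_comp_sandwich _ _ (AlgHom.id k A') hι _) (ρV v)
    _ = sandwich g₁ g φ (comul3 k A b) (map LinearMap.id (indIncl k A V B actV) (ρV v)) := by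
        rw [← sandwich_map]
        exact congrArg (sandwich g₁ g φ · _)
          (LinearMap.congr_fun (map_val_comp_eq_comul3_comp_val hΔB) b)

lemma isComod_of_intertwines {π : IndMod k A V B actV →ₗ[k] A' ⊗[k] IndMod k A V B actV}
    (hρV : IsComod k A' V ρV)
    (hπ : Intertwines (indSmul actV) (twistedAction hg₁ g₃ (indSmul actV)) π)
    (hι : π ∘ₗ indIncl k A V B actV = map LinearMap.id (indIncl k A V B actV) ∘ₗ ρV) :
    IsComod k A' (IndMod k A V B actV) π := by
  constructor
  · refine ((hπ.lTensor_twistedAction hg₁ g₃).comp hπ).ind_hom_ext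
      ((intertwines_opComul hg₁ g₃ _).comp hπ) ?_
    calc (map LinearMap.id π ∘ₗ π) ∘ₗ indIncl k A V B actV
        = map LinearMap.id (map LinearMap.id (indIncl k A V B actV)) ∘ₗ
            map LinearMap.id ρV ∘ₗ ρV := by
          rw [comp_assoc, hι, ← comp_assoc, ← comp_assoc, ← TensorProduct.map_comp,
            ← TensorProduct.map_comp, hι]
      _ = map LinearMap.id (map LinearMap.id (indIncl k A V B actV)) ∘ₗ opComul A' V ∘ₗ ρV := by
          rw [hρV.1]
          rfl
      _ = (opComul A' _ ∘ₗ π) ∘ₗ indIncl k A V B actV := by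
          rw [comp_assoc, hι, ← comp_assoc, ← comp_assoc, opComul_comp_map_id]
  · refine ((intertwines_twistedAction_counit hg₁ g₃ _).comp hπ).ind_hom_ext (.id _) ?_
    rw [comp_assoc, hι, ← comp_assoc, lid_comp_map_counit_comp_map_id]
    calc (indIncl k A V B actV ∘ₗ (TensorProduct.lid k V).toLinearMap ∘ₗ
          map counit LinearMap.id) ∘ₗ ρV
        = indIncl k A V B actV ∘ₗ (TensorProduct.lid k V).toLinearMap ∘ₗ
            map counit LinearMap.id ∘ₗ ρV := rfl
      _ = indIncl k A V B actV := by rw [hρV.2, comp_id]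

end Dimodule

theorem induced_dimodule_exists_unique_general {k A A' V : Type*} [Field k] [Ring A]
    [HopfAlgebra k A] [Ring A'] [Bialgebra k A'] [AddCommGroup V] [Module k V] {g₁ : A →ₗ[k] A'}
    (hg₁ : IsBialgAntiHom g₁) (g₃ : A →ₐc[k] A') {B : Subalgebra k A} {ΔB : B →ₗ[k] B ⊗[k] B}
    (hΔB : map B.val.toLinearMap B.val.toLinearMap ∘ₗ ΔB = comul ∘ₗ B.val.toLinearMap)
    {actV : B ⊗[k] V →ₗ[k] V} {ρV : V →ₗ[k] A' ⊗[k] V}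
    (hV : IsDimodule (map LinearMap.id ΔB ∘ₗ ΔB) (g₁ ∘ₗ B.val.toLinearMap)
      ((g₃ : A →ₐ[k] A').toLinearMap ∘ₗ B.val.toLinearMap) actV ρV) :
    ∃! π : IndMod k A V B actV →ₗ[k] A' ⊗[k] IndMod k A V B actV,
      IsDimodule (comul3 k A) g₁ (g₃ : A →ₐ[k] A').toLinearMap (indAct k A V B actV) π ∧
        π ∘ₗ indIncl k A V B actV = map LinearMap.id (indIncl k A V B actV) ∘ₗ ρV := by
  obtain ⟨π, hπ, hι⟩ := exists_intertwines_ind _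
    (map_indIncl_coaction_actV_tmul hg₁ g₃ hΔB hV.compat)
  refine ⟨π, ⟨⟨isModAction_indAct, isComod_of_intertwines hg₁ g₃ hV.isComod hπ hι,
    (compat_indAct_iff_intertwines hg₁ g₃ π).2 hπ⟩, hι⟩, fun π' ⟨hπ', hι'⟩ ↦ ?_⟩
  exact ((compat_indAct_iff_intertwines hg₁ g₃ π').1 hπ'.compat).ind_hom_ext hπ (hι'.trans hι.symm)

theorem induced_dimodule_exists_unique
    {k A A' V : Type*} [Field k] [Ring A] [HopfAlgebra k A] [Ring A'] [HopfAlgebra k A']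
    [AddCommGroup V] [Module k V]
    -- the antipode of A is bijective, with inverse Sinv
    (Sinv : A →ₗ[k] A)
    (hS1 : Sinv ∘ₗ HopfAlgebra.antipode (R := k) = LinearMap.id)
    (hS2 : HopfAlgebra.antipode (R := k) ∘ₗ Sinv = LinearMap.id)
    -- B is a Hopf subalgebra: Δ(B) ⊆ B ⊗ B (witnessed by ΔB), S(B) ⊆ B, S⁻¹(B) ⊆ B
    (B : Subalgebra k A)
    (ΔB : ↥B →ₗ[k] ↥B ⊗[k] ↥B)
    (hΔB : TensorProduct.map B.val.toLinearMap B.val.toLinearMap ∘ₗ ΔB =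
      Coalgebra.comul (R := k) ∘ₗ B.val.toLinearMap)
    (hSB : ∀ b : B, HopfAlgebra.antipode (R := k) (b : A) ∈ B)
    (hSinvB : ∀ b : B, Sinv (b : A) ∈ B)
    -- q : A → A' is a surjective homomorphism of Hopf algebras
    (q : A →ₐ[k] A') (hq : Function.Surjective q)
    (hqΔ : TensorProduct.map q.toLinearMap q.toLinearMap ∘ₗ Coalgebra.comul (R := k) =
      Coalgebra.comul (R := k) ∘ₗ q.toLinearMap)
    (hqε : Coalgebra.counit (R := k) ∘ₗ q.toLinearMap = Coalgebra.counit (R := k))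
    (hqS : HopfAlgebra.antipode (R := k) ∘ₗ q.toLinearMap =
      q.toLinearMap ∘ₗ HopfAlgebra.antipode (R := k))
    -- V is a (B, A, ker q)-dimodule
    (actV : ↥B ⊗[k] V →ₗ[k] V) (hVmod : IsModAction k (↥B) V actV)
    (ρV : V →ₗ[k] A' ⊗[k] V) (hVcomod : IsComod k A' V ρV)
    (hVcompat : ρV ∘ₗ actV =
      ydRHS k (↥B) A' V (TensorProduct.map LinearMap.id ΔB ∘ₗ ΔB)
        (q.toLinearMap ∘ₗ Sinv ∘ₗ B.val.toLinearMap)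
        (q.toLinearMap ∘ₗ B.val.toLinearMap) ρV actV) :
    -- conclusion: A ⊗_B V carries a unique compatible A'-comodule structure,
    -- making it an (A, A, ker q)-dimodule
    IsModAction k A (IndMod k A V B actV) (indAct k A V B actV) ∧
      ∃! π : IndMod k A V B actV →ₗ[k] A' ⊗[k] IndMod k A V B actV,
        IsComod k A' (IndMod k A V B actV) π ∧
          (∀ v : V, π (indIncl k A V B actV v) =
            TensorProduct.map LinearMap.id (indIncl k A V B actV) (ρV v)) ∧
          π ∘ₗ indAct k A V B actV =
            ydRHS k A A' (IndMod k A V B actV) (comul3 k A)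
              (q.toLinearMap ∘ₗ Sinv) q.toLinearMap π (indAct k A V B actV) := by
  let S : A ≃ₗ[k] A := .ofLinearMap (antipode k) Sinv hS2 hS1
  let q' : A →ₐc[k] A' := .ofAlgHom q (AlgHom.toLinearMap_injective hqε)
    (AlgHom.toLinearMap_injective hqΔ)
  have hS : IsBialgAntiHom S.toLinearMap := isBialgAntiHom_antipode k A
  obtain ⟨π, ⟨hπ, hι⟩, huniq⟩ := induced_dimodule_exists_unique_general
    (hS.symm.bialgHom_comp q') q' hΔB ⟨hVmod, hVcomod, hVcompat⟩
  exact ⟨hπ.isModAction, π, ⟨hπ.isComod, LinearMap.congr_fun hι, hπ.compat⟩,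
    fun π' ⟨hcomod, hι', hcompat⟩ ↦
      huniq π' ⟨⟨hπ.isModAction, hcomod, hcompat⟩, LinearMap.ext hι'⟩⟩
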